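/- Let T be a smooth symmetric 2-tensor field on ℝ^3 \ {0} whose components are homogeneous functions of degree -2, and suppose ∑_{i,j} (D_i D_j T_{ij} - D_i D_i T_{jj}) ≥ 0 on ℝ^3 \ {0}. Fix ξ ∈ ℝ^3 with |ξ| > 1, and define G(s) = ∫_{∂B_1(sξ)} tr_S(T) dA - 2 ∫_{B_1(sξ)} tr_{ℝ^3}(T) dV for s ≥ 1, where tr_S(T) is the trace of T restricted to the tangent space of the sphere and tr_{ℝ^3}(T) = ∑_j T_{jj}. Then G'(1) ≥ 0. -/

import Mathlib

open MeasureTheory Real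

noncomputable abbrev E3 : Type := EuclideanSpace ℝ (Fin 3)

/-- The standard surface measure on the unit sphere in `ℝ³`. -/
noncomputable def sphereMeasure : Measure (Metric.sphere (0 : E3) 1) :=
  (volume : Measure E3).toSphere

/-- The `i`-th standard basis vector of `ℝ³`. -/
noncomputable def e3 (i : Fin 3) : E3 := EuclideanSpace.single i 1

/-- Partial derivative `D_i f`. -/
noncomputable def pd (f : E3 → ℝ) (i : Fin 3) (x : E3) : ℝ := fderiv ℝ f x (e3 i)

/-- The trace `tr_{ℝ³}(T) = ∑_j T_jj`. -/
def trT (T : E3 → Fin 3 → Fin 3 → ℝ) (x : E3) : ℝ := ∑ j, T x j j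

/-- The quadratic form `T(v, v) = ∑_{i,j} T_ij v_i v_j`. -/
def quadT (T : E3 → Fin 3 → Fin 3 → ℝ) (x : E3) (v : E3) : ℝ :=
  ∑ i, ∑ j, T x i j * v i * v j

/-- `∑_{i,j} (D_i D_j T_ij - D_i D_i T_jj)`, the leading term of the scalar curvature. -/
noncomputable def scalDiv (T : E3 → Fin 3 → Fin 3 → ℝ) (x : E3) : ℝ :=
  ∑ i, ∑ j, (pd (pd (fun z => T z i j) j) i x - pd (pd (fun z => T z j j) i) i x)

/-!
Averaging over rotations (integrating `Dh` along the skew maps `ω ↦ ⟪b, ω⟫ v - ⟪v, ω⟫ b`) gives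
integration by parts on the unit sphere, hence `d/dr flux X c r = ∫_{∂B_r(c)} div X`; together with
polar coordinates this is the divergence theorem on balls.

Let `n` be the dimension, `u(r)` the tangential trace defect of `T` on `B_r(ξ)`, and
`W_i = ∑_j (D_j T_ij - D_i T_jj)`, so that `div W ≥ 0` is the hypothesis on `T`. The divergence
theorem for `(tr T) (x - ξ) - Tᵀ (x - ξ)` gives `u(r) = -∫_0^r ρ f(ρ) dρ` with `f(ρ)` the flux of
`W` through `∂B_ρ(ξ)`. Since `f` is nonnegative and increasing, `-f(1)/2 ≤ u(1) ≤ 0`. If `T` has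
degree `a`, rescaling gives `G(s) = s^(n + a) u(1/s)`, so `G'(1) = (n + a) u(1) + f(1)`, which is
nonnegative as soon as `n + a ≤ 2`.
-/

open Set Filter Metric Topology Module
open scoped RealInnerProductSpace Pointwise

/-! ### Calculus -/

theorem hasDerivAt_integral_of_continuous {X F : Type*} [TopologicalSpace X] [CompactSpace X]
    [MeasurableSpace X] [BorelSpace X] {μ : Measure X} [IsFiniteMeasure μ]
    [NormedAddCommGroup F] [NormedSpace ℝ F] {f f' : ℝ → X → F}
    (hf : Continuous f.uncurry) (hf' : Continuous f'.uncurry)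
    (hderiv : ∀ t x, HasDerivAt (f · x) (f' t x) t) (t : ℝ) :
    HasDerivAt (fun s => ∫ x, f s x ∂μ) (∫ x, f' t x ∂μ) t := by
  have hft (s : ℝ) : Continuous (f s) := hf.comp (Continuous.prodMk_right s)
  have hft' : Continuous (f' t) := hf'.comp (Continuous.prodMk_right t)
  obtain ⟨C, hC⟩ := ((isCompact_closedBall t 1).prod isCompact_univ).exists_bound_of_continuousOn
    hf'.continuousOn
  exact (hasDerivAt_integral_of_dominated_loc_of_deriv_le (bound := fun _ => C)
    (closedBall_mem_nhds t one_pos)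
    (.of_forall fun s => (hft s).aestronglyMeasurable_of_compactSpace)
    ((hft t).integrable_of_hasCompactSupport (.of_compactSpace _))
    hft'.aestronglyMeasurable_of_compactSpace
    (.of_forall fun x s hs => hC (s, x) ⟨hs, mem_univ x⟩)
    (integrable_const C) (.of_forall fun x s _ => hderiv s x)).2

theorem fderiv_comp_add_smul {E F : Type*} [NormedAddCommGroup E] [NormedSpace ℝ E]
    [NormedAddCommGroup F] [NormedSpace ℝ F] (f : E → F) (c : E) (r : ℝ) (x : E) :
    fderiv ℝ (fun y => f (c + r • y)) x = r • fderiv ℝ f (c + r • x) := by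
  rw [← fderiv_comp_add_left]
  exact fderiv_comp_smul (f := fun y => f (c + y)) r

open scoped Manifold in
theorem exists_contDiff_eventuallyEq_nhdsSet {E F : Type*} [NormedAddCommGroup E] [NormedSpace ℝ E]
    [FiniteDimensional ℝ E] [NormedAddCommGroup F] [NormedSpace ℝ F] {n : ℕ∞} {f : E → F}
    {U K : Set E} (hf : ContDiffOn ℝ n f U) (hU : IsOpen U) (hK : IsClosed K) (hKU : K ⊆ U) :
    ∃ g : E → F, ContDiff ℝ n g ∧ g =ᶠ[𝓝ˢ K] f := by
  obtain ⟨χ, hχ0, hχ1, -⟩ := exists_contMDiffMap_zero_one_nhds_of_isClosed (n := n) 𝓘(ℝ, E)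
    hU.isClosed_compl hK (disjoint_compl_left_iff_subset.2 hKU)
  refine ⟨fun x => χ x • f x, contDiff_iff_contDiffAt.2 fun x => ?_, ?_⟩
  · by_cases hx : x ∈ U
    · exact χ.contMDiff.contDiff.contDiffAt.smul (hf.contDiffAt (hU.mem_nhds hx))
    · refine (contDiffAt_const (c := (0 : F))).congr_of_eventuallyEq ?_
      filter_upwards [hχ0.filter_mono (nhds_le_nhdsSet hx)] with y hy
      rw [hy, zero_smul]
  · filter_upwards [hχ1] with x hx
    rw [hx, one_smul]

/-! ### Integration over spheres and balls -/

theorem integral_volumeIoiPow (n : ℕ) (g : ℝ → ℝ) :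
    ∫ r : Ioi (0 : ℝ), g r ∂.volumeIoiPow n = ∫ r in Ioi (0 : ℝ), r ^ n * g r := by
  rw [Measure.volumeIoiPow, integral_withDensity_eq_integral_toReal_smul (by fun_prop) (by simp),
    ← integral_subtype_comap measurableSet_Ioi fun r => r ^ n * g r]
  refine integral_congr_ae (.of_forall fun r => ?_)
  simp [ENNReal.toReal_ofReal (pow_nonneg (le_of_lt (mem_Ioi.1 r.2)) n)]

section Sphere

variable {E : Type*} [NormedAddCommGroup E] [InnerProductSpace ℝ E]

theorem sum_fderiv_inner_mul_rankOne_sub_rankOne {ι : Type*} [Fintype ι]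
    (b : OrthonormalBasis ι ℝ E) {h : E → ℝ} {x : E} (hh : DifferentiableAt ℝ h x) (hx : ‖x‖ = 1)
    (v : E) :
    ∑ j, fderiv ℝ (fun y => ⟪b j, y⟫ * h y) x
        ((InnerProductSpace.rankOne ℝ v (b j) - InnerProductSpace.rankOne ℝ (b j) v) x) =
      fderiv ℝ h x v - (⟪x, v⟫ * fderiv ℝ h x x + (finrank ℝ E - 1) * (⟪x, v⟫ * h x)) := by
  have hterm (j) : fderiv ℝ (fun y => ⟪b j, y⟫ * h y) x
      ((InnerProductSpace.rankOne ℝ v (b j) - InnerProductSpace.rankOne ℝ (b j) v) x) =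
      (⟪x, b j⟫ * ⟪b j, x⟫) * fderiv ℝ h x v - ⟪x, v⟫ * fderiv ℝ h x (⟪b j, x⟫ • b j) +
        (⟪x, b j⟫ * ⟪b j, v⟫ - ⟪x, v⟫) * h x := by
    have hb : HasFDerivAt (fun y => ⟪b j, y⟫) (innerSL ℝ (b j)) x := (innerSL ℝ (b j)).hasFDerivAt
    rw [(hb.fun_mul hh.hasFDerivAt).fderiv]
    simp only [real_inner_comm, sub_apply, InnerProductSpace.rankOne_apply, add_apply, smul_apply,
      map_sub, map_smul, smul_eq_mul, coe_innerSL_apply, real_inner_self_eq_norm_sq,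
      b.norm_eq_one, one_pow, mul_one]
    ring
  simp only [hterm, Finset.sum_add_distrib, Finset.sum_sub_distrib, ← Finset.sum_mul,
    ← Finset.mul_sum, ← map_sum, b.sum_inner_mul_inner, b.sum_repr', real_inner_self_eq_norm_sq,
    hx, Finset.sum_const, Finset.card_univ, nsmul_eq_mul, finrank_eq_card_basis b.toBasis]
  ring

variable [FiniteDimensional ℝ E]

theorem exists_linearIsometryEquiv_hasDerivAt {A : E →L[ℝ] E}
    (hA : A ∈ skewAdjoint (E →L[ℝ] E)) :
    ∃ R : ℝ → E ≃ₗᵢ[ℝ] E, R 0 = .refl ℝ E ∧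
      ∀ t, HasDerivAt (fun s => (R s : E →L[ℝ] E)) (A ∘L (R t : E →L[ℝ] E)) t := by
  let _ := NormedAlgebra.restrictScalars ℚ ℝ (E →L[ℝ] E)
  refine ⟨fun t => Unitary.linearIsometryEquiv
    ⟨_, NormedSpace.exp_mem_unitary_of_mem_skewAdjoint (skewAdjoint.smul_mem t hA)⟩, ?_, ?_⟩
  · ext x
    simp [Unitary.linearIsometryEquiv]
  · exact fun t => hasDerivAt_exp_smul_const' A t

theorem rankOne_sub_rankOne_mem_skewAdjoint (v w : E) :
    InnerProductSpace.rankOne ℝ v w - InnerProductSpace.rankOne ℝ w v ∈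
      skewAdjoint (E →L[ℝ] E) := by
  simp [skewAdjoint.mem_iff, ContinuousLinearMap.star_eq_adjoint]

/-- The divergence of a vector field, as the trace of its derivative. -/
noncomputable def divergence (X : E → E) (x : E) : ℝ := LinearMap.trace ℝ E (fderiv ℝ X x)

theorem continuous_divergence {X : E → E} (hX : ContDiff ℝ 1 X) : Continuous (divergence X) :=
  ((LinearMap.trace ℝ E ∘ₗ ContinuousLinearMap.coeLM ℝ).continuous_of_finiteDimensional).comp
    (hX.continuous_fderiv one_ne_zero)

variable [MeasurableSpace E] [BorelSpace E]

theorem integrable_sphere {g : E → ℝ} (hg : Continuous g) :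
    Integrable (fun ω : sphere (0 : E) 1 => g ω) (volume : Measure E).toSphere :=
  (hg.comp continuous_subtype_val).integrable_of_hasCompactSupport (.of_compactSpace _)

theorem continuous_integral_sphere {f : ℝ → E → ℝ} (hf : Continuous f.uncurry) :
    Continuous fun t => ∫ ω : sphere (0 : E) 1, f t ω ∂(volume : Measure E).toSphere := by
  simpa using continuous_parametric_integral_of_continuous
    (f := fun t (ω : sphere (0 : E) 1) => f t ω)
    (hf.comp (continuous_id.prodMap continuous_subtype_val)) isCompact_univ

theorem measurePreserving_sphere (R : E ≃ₗᵢ[ℝ] E) :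
    MeasurePreserving (R.toHomeomorph.subtype (p := (· ∈ sphere 0 1)) (q := (· ∈ sphere 0 1))
      fun x => by simp) (volume : Measure E).toSphere (volume : Measure E).toSphere := by
  set φ := R.toHomeomorph.subtype (p := (· ∈ sphere 0 1)) (q := (· ∈ sphere 0 1))
      fun x => by simp
  refine ⟨φ.measurable, Measure.ext fun s hs => ?_⟩
  have hcone : Ioo (0 : ℝ) 1 • (Subtype.val '' (φ ⁻¹' s)) =
      R ⁻¹' (Ioo (0 : ℝ) 1 • (Subtype.val '' s)) := by
    ext x
    simp only [Set.mem_smul, mem_preimage]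
    constructor
    · rintro ⟨a, ha, _, ⟨ω, hω, rfl⟩, rfl⟩
      exact ⟨a, ha, _, ⟨φ ω, hω, rfl⟩, (map_smul R a (ω : E)).symm⟩
    · rintro ⟨a, ha, _, ⟨ω, hω, rfl⟩, hx⟩
      refine ⟨a, ha, _, ⟨φ.symm ω, by simpa using hω, rfl⟩, ?_⟩
      rw [← R.symm_apply_apply x, ← hx, map_smul]
      rfl
  rw [Measure.map_apply φ.measurable hs, Measure.toSphere_apply' _ hs,
    Measure.toSphere_apply' _ (φ.measurable hs), hcone]
  congr 1
  exact R.measurePreserving.measure_preimage_equiv (f := R.toMeasurableEquiv) _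

theorem integral_sphere_comp_linearIsometryEquiv {F : Type*} [NormedAddCommGroup F]
    [NormedSpace ℝ F] (R : E ≃ₗᵢ[ℝ] E) (f : E → F) :
    ∫ ω : sphere (0 : E) 1, f (R ω) ∂(volume : Measure E).toSphere =
      ∫ ω : sphere (0 : E) 1, f ω ∂(volume : Measure E).toSphere :=
  (measurePreserving_sphere R).integral_comp (Homeomorph.measurableEmbedding _) (fun ω => f ω)

theorem integral_sphere_fderiv_skewAdjoint {h : E → ℝ} (hh : ContDiff ℝ 1 h) {A : E →L[ℝ] E}
    (hA : A ∈ skewAdjoint (E →L[ℝ] E)) :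
    ∫ ω : sphere (0 : E) 1, fderiv ℝ h ω (A ω) ∂(volume : Measure E).toSphere = 0 := by
  obtain ⟨R, hR0, hR⟩ := exists_linearIsometryEquiv_hasDerivAt hA
  have hRcont : Continuous fun t => (R t : E →L[ℝ] E) :=
    continuous_iff_continuousAt.2 fun t => (hR t).continuousAt
  have hcont : Continuous fun p : ℝ × sphere (0 : E) 1 => (R p.1 : E →L[ℝ] E) p.2 := by
    exact (hRcont.comp continuous_fst).clm_apply (continuous_subtype_val.comp continuous_snd)
  have hderiv := hasDerivAt_integral_of_continuous (μ := (volume : Measure E).toSphere)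
    (f := fun t (ω : sphere (0 : E) 1) => h (R t ω))
    (f' := fun t ω => fderiv ℝ h (R t ω) (A (R t ω)))
    (hh.continuous.comp hcont)
    (((hh.continuous_fderiv one_ne_zero).comp hcont).clm_apply (A.continuous.comp hcont))
    (fun t ω => (hh.differentiable one_ne_zero _).hasFDerivAt.comp_hasDerivAt t
      (by simpa using (hR t).clm_apply (hasDerivAt_const t (ω : E)))) 0
  simp only [integral_sphere_comp_linearIsometryEquiv, hR0] at hderiv
  exact hderiv.unique (hasDerivAt_const 0 _)

theorem integral_sphere_fderiv {h : E → ℝ} (hh : ContDiff ℝ 1 h) (v : E) :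
    ∫ ω : sphere (0 : E) 1, fderiv ℝ h ω v ∂(volume : Measure E).toSphere =
      ∫ ω : sphere (0 : E) 1, (⟪(ω : E), v⟫ * fderiv ℝ h ω ω +
        (finrank ℝ E - 1) * (⟪(ω : E), v⟫ * h ω)) ∂(volume : Measure E).toSphere := by
  set b := stdOrthonormalBasis ℝ E
  have hbh (j) : ContDiff ℝ 1 fun x => ⟪b j, x⟫ * h x := (contDiff_const.inner ℝ contDiff_id).mul hh
  have := hh.continuous_fderiv one_ne_zero
  let A (j) := InnerProductSpace.rankOne ℝ v (b j) - InnerProductSpace.rankOne ℝ (b j) v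
  have hzero : ∫ ω : sphere (0 : E) 1, ∑ j, fderiv ℝ (fun x => ⟪b j, x⟫ * h x) ω (A j ω)
      ∂(volume : Measure E).toSphere = 0 := by
    rw [integral_finsetSum]
    · exact Finset.sum_eq_zero fun j _ =>
        integral_sphere_fderiv_skewAdjoint (hbh j) (rankOne_sub_rankOne_mem_skewAdjoint v (b j))
    · exact fun j _ => integrable_sphere
        (g := fun x => fderiv ℝ (fun x => ⟪b j, x⟫ * h x) x (A j x))
        (((hbh j).continuous_fderiv one_ne_zero).clm_apply (A j).continuous)
  rw [integral_congr_ae (.of_forall fun ω : sphere (0 : E) 1 =>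
      sum_fderiv_inner_mul_rankOne_sub_rankOne b (hh.differentiable one_ne_zero _)
        (norm_eq_of_mem_sphere ω) v),
    integral_sub (integrable_sphere (g := fun x => fderiv ℝ h x v) (by fun_prop))
      (integrable_sphere
        (g := fun x => ⟪x, v⟫ * fderiv ℝ h x x + (finrank ℝ E - 1) * (⟪x, v⟫ * h x))
        (by fun_prop))] at hzero
  exact sub_eq_zero.1 hzero

theorem integral_sphere_divergence {X : E → E} (hX : ContDiff ℝ 1 X) :
    ∫ ω : sphere (0 : E) 1, divergence X ω ∂(volume : Measure E).toSphere =
      ∫ ω : sphere (0 : E) 1, (⟪(ω : E), fderiv ℝ X ω ω⟫ + (finrank ℝ E - 1) * ⟪(ω : E), X ω⟫)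
        ∂(volume : Measure E).toSphere := by
  set b := stdOrthonormalBasis ℝ E
  have hbX (j) : ContDiff ℝ 1 fun x => ⟪b j, X x⟫ := contDiff_const.inner ℝ hX
  have := hX.continuous_fderiv one_ne_zero
  have hfderiv (j) (x v : E) : fderiv ℝ (fun x => ⟪b j, X x⟫) x v = ⟪b j, fderiv ℝ X x v⟫ := by
    rw [fderiv_inner_apply ℝ (differentiableAt_const _) (hX.differentiable one_ne_zero x)]
    simp
  calc
    _ = ∫ ω : sphere (0 : E) 1, ∑ j, fderiv ℝ (fun x => ⟪b j, X x⟫) ω (b j)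
        ∂(volume : Measure E).toSphere := by
      simp only [divergence, LinearMap.trace_eq_sum_inner _ b, hfderiv,
        ContinuousLinearMap.coe_coe]
    _ = ∑ j, ∫ ω : sphere (0 : E) 1, fderiv ℝ (fun x => ⟪b j, X x⟫) ω (b j)
        ∂(volume : Measure E).toSphere :=
      integral_finsetSum _ fun j _ => integrable_sphere
        (g := fun x => fderiv ℝ (fun x => ⟪b j, X x⟫) x (b j))
        (((hbX j).continuous_fderiv one_ne_zero).clm_apply continuous_const)
    _ = ∫ ω : sphere (0 : E) 1, ∑ j, (⟪(ω : E), b j⟫ * ⟪b j, fderiv ℝ X ω ω⟫ +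
        (finrank ℝ E - 1) * (⟪(ω : E), b j⟫ * ⟪b j, X ω⟫)) ∂(volume : Measure E).toSphere := by
      simp only [integral_sphere_fderiv (hbX _)]
      simp only [hfderiv]
      refine (integral_finsetSum _ fun j _ => integrable_sphere (g := fun x =>
        ⟪x, b j⟫ * ⟪b j, fderiv ℝ X x x⟫ + (finrank ℝ E - 1) * (⟪x, b j⟫ * ⟪b j, X x⟫)) ?_).symm
      fun_prop
    _ = _ := by
      simp only [Finset.sum_add_distrib, ← Finset.mul_sum, b.sum_inner_mul_inner]

theorem mul_integral_sphere_divergence {X : E → E} (hX : ContDiff ℝ 1 X) (c : E) (r : ℝ) :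
    r * ∫ ω : sphere (0 : E) 1, divergence X (c + r • (ω : E)) ∂(volume : Measure E).toSphere =
      r * ∫ ω : sphere (0 : E) 1, ⟪(ω : E), fderiv ℝ X (c + r • (ω : E)) ω⟫
          ∂(volume : Measure E).toSphere +
        (finrank ℝ E - 1) * ∫ ω : sphere (0 : E) 1, ⟪(ω : E), X (c + r • (ω : E))⟫
          ∂(volume : Measure E).toSphere := by
  have := hX.continuous_fderiv one_ne_zero
  have hdiv := integral_sphere_divergence (X := fun x => X (c + r • x)) (by fun_prop)
  simp only [divergence, fderiv_comp_add_smul, ContinuousLinearMap.toLinearMap_smul, map_smul,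
    smul_eq_mul, smul_apply, inner_smul_right] at hdiv
  rw [integral_add
      (integrable_sphere (g := fun x => r * ⟪x, fderiv ℝ X (c + r • x) x⟫) (by fun_prop))
      (integrable_sphere (g := fun x => (finrank ℝ E - 1) * ⟪x, X (c + r • x)⟫) (by fun_prop))]
    at hdiv
  simpa only [divergence, integral_const_mul] using hdiv

/-- The surface integral of `f` over the sphere of radius `r ≥ 0` about `c`, pulled back to the unit
sphere. -/
noncomputable def sphereIntegral (f : E → ℝ) (c : E) (r : ℝ) : ℝ :=
  r ^ (finrank ℝ E - 1) * ∫ ω : sphere (0 : E) 1, f (c + r • (ω : E)) ∂(volume : Measure E).toSphere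

/-- The outward flux of `X` through the sphere of radius `r ≥ 0` about `c`, pulled back to the unit
sphere. -/
noncomputable def flux (X : E → E) (c : E) (r : ℝ) : ℝ :=
  r ^ (finrank ℝ E - 1) *
    ∫ ω : sphere (0 : E) 1, ⟪(ω : E), X (c + r • (ω : E))⟫ ∂(volume : Measure E).toSphere

theorem hasDerivAt_flux (hE : 1 < finrank ℝ E) {X : E → E} (hX : ContDiff ℝ 1 X) (c : E) (r : ℝ) :
    HasDerivAt (flux X c) (sphereIntegral (divergence X) c r) r := by
  have := hX.continuous_fderiv one_ne_zero
  have hradial : HasDerivAt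
      (fun s => ∫ ω : sphere (0 : E) 1, ⟪(ω : E), X (c + s • (ω : E))⟫
        ∂(volume : Measure E).toSphere)
      (∫ ω : sphere (0 : E) 1, ⟪(ω : E), fderiv ℝ X (c + r • (ω : E)) ω⟫
        ∂(volume : Measure E).toSphere) r := by
    refine hasDerivAt_integral_of_continuous
      (f := fun s (ω : sphere (0 : E) 1) => ⟪(ω : E), X (c + s • (ω : E))⟫)
      (f' := fun s ω => ⟪(ω : E), fderiv ℝ X (c + s • (ω : E)) ω⟫)
      (by fun_prop) (by fun_prop) (fun s ω => ?_) r
    have hline : HasDerivAt (fun s : ℝ => c + s • (ω : E)) (ω : E) s := by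
      simpa using ((hasDerivAt_id s).smul_const (ω : E)).const_add c
    simpa using (hasDerivAt_const s (ω : E)).inner ℝ
      ((hX.differentiable one_ne_zero _).hasFDerivAt.comp_hasDerivAt s hline)
  have hdiv := mul_integral_sphere_divergence hX c r
  refine ((hasDerivAt_pow (finrank ℝ E - 1) r).mul hradial).congr_deriv ?_
  rw [sphereIntegral, ← pow_sub_one_mul (Nat.sub_ne_zero_of_lt hE) r,
    Nat.cast_pred (zero_lt_one.trans hE)]
  linear_combination -r ^ (finrank ℝ E - 1 - 1) * hdiv

theorem continuous_sphereIntegral {f : E → ℝ} (hf : Continuous f) (c : E) :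
    Continuous (sphereIntegral f c) :=
  (continuous_pow _).mul (continuous_integral_sphere (f := fun ρ ω => f (c + ρ • ω)) (by fun_prop))

theorem continuous_flux {X : E → E} (hX : Continuous X) (c : E) : Continuous (flux X c) := by
  exact (continuous_pow _).mul (continuous_integral_sphere
    (f := fun ρ ω => ⟪ω, X (c + ρ • ω)⟫) (by fun_prop))

theorem integrable_sphere_prod {f : E → ℝ} (hf : Integrable f) :
    Integrable (fun p : sphere (0 : E) 1 × Ioi (0 : ℝ) => f ((p.2 : ℝ) • (p.1 : E)))
      ((volume : Measure E).toSphere.prod (.volumeIoiPow (finrank ℝ E - 1))) := by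
  rw [← (volume : Measure E).measurePreserving_homeomorphUnitSphereProd.integrable_comp_emb
    (Homeomorph.measurableEmbedding _)]
  refine ((integrableOn_iff_comap_subtypeVal (by measurability)).1
    (hf.integrableOn (s := {0}ᶜ))).congr (.of_forall fun x => ?_)
  simp [smul_smul, norm_ne_zero_iff.2 x.2]

theorem integral_eq_integral_sphere_prod [Nontrivial E] (f : E → ℝ) :
    ∫ x, f x = ∫ p : sphere (0 : E) 1 × Ioi (0 : ℝ), f ((p.2 : ℝ) • (p.1 : E))
      ∂(volume : Measure E).toSphere.prod (.volumeIoiPow (finrank ℝ E - 1)) := by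
  have hcompl := integral_subtype_comap (μ := volume) (measurableSet_singleton (0 : E)).compl f
  rw [restrict_compl_singleton] at hcompl
  rw [← hcompl, ← (volume : Measure E).measurePreserving_homeomorphUnitSphereProd.integral_comp
    (Homeomorph.measurableEmbedding _)]
  refine integral_congr_ae (.of_forall fun x => ?_)
  simp [smul_smul, norm_ne_zero_iff.2 x.2]

theorem integral_eq_integral_sphereIntegral [Nontrivial E] {f : E → ℝ} (hf : Integrable f) (c : E) :
    ∫ x, f x = ∫ r in Ioi 0, sphereIntegral f c r := by
  rw [← integral_add_left_eq_self f c, integral_eq_integral_sphere_prod fun x => f (c + x),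
    integral_prod_symm _ (integrable_sphere_prod (hf.comp_add_left c)),
    integral_volumeIoiPow _ fun r =>
      ∫ ω : sphere (0 : E) 1, f (c + r • (ω : E)) ∂(volume : Measure E).toSphere]
  rfl

theorem setIntegral_closedBall_eq_integral_sphereIntegral [Nontrivial E] {f : E → ℝ} {c : E} {r : ℝ}
    (hf : IntegrableOn f (closedBall c r)) (hr : 0 ≤ r) :
    ∫ x in closedBall c r, f x = ∫ ρ in (0)..r, sphereIntegral f c ρ := by
  have hindicator : EqOn (sphereIntegral ((closedBall c r).indicator f) c)
      ((Iic r).indicator (sphereIntegral f c)) (Ioi 0) := by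
    intro ρ hρ
    have hmem (ω : sphere (0 : E) 1) : c + ρ • (ω : E) ∈ closedBall c r ↔ ρ ≤ r := by
      simp [norm_smul, abs_of_pos (mem_Ioi.1 hρ)]
    by_cases hρr : ρ ≤ r
    · simp [sphereIntegral, indicator, hmem, hρr]
    · simp [sphereIntegral, indicator, hmem, hρr]
  rw [← integral_indicator isClosed_closedBall.measurableSet, integral_eq_integral_sphereIntegral
    ((integrable_indicator_iff isClosed_closedBall.measurableSet).2 hf) c,
    setIntegral_congr_fun measurableSet_Ioi hindicator, setIntegral_indicator measurableSet_Iic,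
    Ioi_inter_Iic, intervalIntegral.integral_of_le hr]

theorem setIntegral_divergence_closedBall (hE : 1 < finrank ℝ E) {X : E → E} (hX : ContDiff ℝ 1 X)
    (c : E) {r : ℝ} (hr : 0 ≤ r) : ∫ x in closedBall c r, divergence X x = flux X c r := by
  have : Nontrivial E := nontrivial_of_finrank_pos (zero_lt_one.trans hE)
  have hdiv := continuous_divergence hX
  have hflux0 : flux X c 0 = 0 := by simp [flux, Nat.sub_ne_zero_of_lt hE]
  rw [setIntegral_closedBall_eq_integral_sphereIntegral
      (hdiv.continuousOn.integrableOn_compact (isCompact_closedBall c r)) hr,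
    intervalIntegral.integral_eq_sub_of_hasDerivAt (fun ρ _ => hasDerivAt_flux hE hX c ρ)
      ((continuous_sphereIntegral hdiv c).intervalIntegrable 0 r), hflux0, sub_zero]

theorem sphereIntegral_inner_sub (X : E → E) (c : E) (r : ℝ) :
    sphereIntegral (fun x => ⟪X x, x - c⟫) c r = r * flux X c r := by
  simp only [sphereIntegral, flux, add_sub_cancel_left, inner_smul_right, integral_const_mul,
    real_inner_comm (X _)]
  ring

theorem flux_nonneg_of_divergence_nonneg (hE : 1 < finrank ℝ E) {X : E → E} (hX : ContDiff ℝ 1 X)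
    {c : E} {r : ℝ} (hr : 0 ≤ r) (hdiv : ∀ x ∈ closedBall c r, 0 ≤ divergence X x) :
    0 ≤ flux X c r := by
  rw [← setIntegral_divergence_closedBall hE hX c hr]
  exact setIntegral_nonneg isClosed_closedBall.measurableSet hdiv

theorem flux_monotoneOn_of_divergence_nonneg (hE : 1 < finrank ℝ E) {X : E → E}
    (hX : ContDiff ℝ 1 X) {c : E} {r : ℝ} (hdiv : ∀ x ∈ closedBall c r, 0 ≤ divergence X x) :
    MonotoneOn (flux X c) (Icc 0 r) := by
  intro ρ hρ σ hσ hρσ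
  rw [← setIntegral_divergence_closedBall hE hX c hρ.1,
    ← setIntegral_divergence_closedBall hE hX c hσ.1]
  refine setIntegral_mono_set
    ((continuous_divergence hX).continuousOn.integrableOn_compact (isCompact_closedBall c σ)) ?_
    (closedBall_subset_closedBall hρσ).eventuallyLE
  filter_upwards [ae_restrict_mem isClosed_closedBall.measurableSet] with x hx
  exact hdiv x (closedBall_subset_closedBall hσ.2 hx)

end Sphere

/-! ### Tensor fields -/

section PartialDeriv

variable {ι : Type*} [DecidableEq ι]

/-- The partial derivative `D_i f`. -/
noncomputable def partialDeriv (f : EuclideanSpace ℝ ι → ℝ) (i : ι) (x : EuclideanSpace ℝ ι) : ℝ :=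
  fderiv ℝ f x (EuclideanSpace.single i 1)

theorem partialDeriv_eventuallyEq {f g : EuclideanSpace ℝ ι → ℝ} {x : EuclideanSpace ℝ ι}
    (h : f =ᶠ[𝓝 x] g) (i : ι) : partialDeriv f i =ᶠ[𝓝 x] partialDeriv g i :=
  (h.fderiv (𝕜 := ℝ)).mono fun _ hy => by simp only [partialDeriv, hy]

end PartialDeriv

section Tensor

variable {ι : Type*} [Fintype ι]

/-- The vector field `(tr T) (x - c) - Tᵀ (x - c)`, whose normal component on a sphere about `c` is
the radius times the trace of `T` on the tangent space of the sphere. -/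
noncomputable def positionField (T : EuclideanSpace ℝ ι → ι → ι → ℝ) (c x : EuclideanSpace ℝ ι) :
    EuclideanSpace ℝ ι :=
  WithLp.toLp 2 fun j => (∑ i, T x i i) * (x - c) j - ∑ i, T x i j * (x - c) i

theorem contDiff_positionField {T : EuclideanSpace ℝ ι → ι → ι → ℝ} (hT : ContDiff ℝ 1 T)
    (c : EuclideanSpace ℝ ι) : ContDiff ℝ 1 (positionField T c) := by
  refine contDiff_euclidean.2 fun i => ?_
  simp only [positionField, PiLp.sub_apply]
  fun_prop

/-- `r ∫_{∂B_r(c)} tr_S(T) dA - (n - 1) ∫_{B_r(c)} tr(T) dV` in dimension `n`, for `r ≥ 0`, with the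
surface integral pulled back to the unit sphere. -/
noncomputable def tangentialTraceDefect (T : EuclideanSpace ℝ ι → ι → ι → ℝ)
    (c : EuclideanSpace ℝ ι) (r : ℝ) : ℝ :=
  r ^ Fintype.card ι * (∫ ω : sphere (0 : EuclideanSpace ℝ ι) 1,
      (∑ j, T (c + r • (ω : EuclideanSpace ℝ ι)) j j -
        ∑ i, ∑ j, T (c + r • (ω : EuclideanSpace ℝ ι)) i j * ω.1 i * ω.1 j)
      ∂(volume : Measure (EuclideanSpace ℝ ι)).toSphere) -
    (Fintype.card ι - 1) * ∫ x in closedBall c r, ∑ j, T x j j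

theorem inner_positionField (T : EuclideanSpace ℝ ι → ι → ι → ℝ)
    (c : EuclideanSpace ℝ ι) (r : ℝ) {ω : EuclideanSpace ℝ ι} (hω : ‖ω‖ = 1) :
    ⟪ω, positionField T c (c + r • ω)⟫ =
      r * (∑ j, T (c + r • ω) j j - ∑ i, ∑ j, T (c + r • ω) i j * ω i * ω j) := by
  calc
    _ = ∑ j, (r * (∑ i, T (c + r • ω) i i) * ω j ^ 2 -
          r * ∑ i, T (c + r • ω) i j * ω i * ω j) := by
      simp only [PiLp.inner_apply, positionField, add_sub_cancel_left, PiLp.smul_apply, smul_eq_mul,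
        RCLike.inner_apply, conj_trivial]
      refine Finset.sum_congr rfl fun j _ => ?_
      simp only [sub_mul, Finset.mul_sum, Finset.sum_mul]
      congr! 2 <;> ring
    _ = r * (∑ i, T (c + r • ω) i i) * ‖ω‖ ^ 2 -
          r * ∑ i, ∑ j, T (c + r • ω) i j * ω i * ω j := by
      rw [Finset.sum_sub_distrib, ← Finset.mul_sum, ← Finset.mul_sum,
        EuclideanSpace.real_norm_sq_eq, Finset.sum_comm]
    _ = _ := by rw [hω]; ring

theorem flux_positionField [Nonempty ι] (T : EuclideanSpace ℝ ι → ι → ι → ℝ)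
    (c : EuclideanSpace ℝ ι) (r : ℝ) :
    flux (positionField T c) c r =
      r ^ Fintype.card ι * ∫ ω : sphere (0 : EuclideanSpace ℝ ι) 1,
        (∑ j, T (c + r • (ω : EuclideanSpace ℝ ι)) j j -
          ∑ i, ∑ j, T (c + r • (ω : EuclideanSpace ℝ ι)) i j * ω.1 i * ω.1 j)
        ∂(volume : Measure (EuclideanSpace ℝ ι)).toSphere := by
  simp only [flux, inner_positionField T c r (norm_eq_of_mem_sphere _), integral_const_mul,
    finrank_euclideanSpace]
  rw [← mul_assoc, pow_sub_one_mul Fintype.card_ne_zero]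

theorem tangentialTraceDefect_congr {T T' : EuclideanSpace ℝ ι → ι → ι → ℝ}
    {c : EuclideanSpace ℝ ι} {r : ℝ} (hr : 0 ≤ r) (h : EqOn T T' (closedBall c r)) :
    tangentialTraceDefect T c r = tangentialTraceDefect T' c r := by
  have hmem (ω : sphere (0 : EuclideanSpace ℝ ι) 1) :
      c + r • (ω : EuclideanSpace ℝ ι) ∈ closedBall c r := by simp [norm_smul, abs_of_nonneg hr]
  have htrace : EqOn (fun x => ∑ j, T x j j) (fun x => ∑ j, T' x j j) (closedBall c r) :=
    fun x hx => by simp only [h hx]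
  simp only [tangentialTraceDefect, h (hmem _),
    setIntegral_congr_fun isClosed_closedBall.measurableSet htrace]

theorem tangentialTraceDefect_smul {T : EuclideanSpace ℝ ι → ι → ι → ℝ}
    {c : EuclideanSpace ℝ ι} {r s k : ℝ} (hr : 0 ≤ r) (hs : 0 < s)
    (hT : ∀ x ∈ closedBall c r, T (s • x) = k • T x) :
    tangentialTraceDefect T (s • c) (s * r) =
      s ^ Fintype.card ι * k * tangentialTraceDefect T c r := by
  have hscaled : tangentialTraceDefect T (s • c) (s * r) =
      s ^ Fintype.card ι * tangentialTraceDefect (fun x => T (s • x)) c r := by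
    have hball : ∫ x in closedBall c r, ∑ j, T (s • x) j j =
        (s ^ Fintype.card ι)⁻¹ * ∫ x in closedBall (s • c) (s * r), ∑ j, T x j j := by
      rw [Measure.setIntegral_comp_smul_of_pos volume (fun x => ∑ j, T x j j) _ hs,
        _root_.smul_closedBall _ _ hr, Real.norm_of_nonneg hs.le,
        finrank_euclideanSpace, smul_eq_mul]
    simp only [tangentialTraceDefect, hball, smul_add, smul_smul, mul_pow]
    field_simp
  have hlinear :
      tangentialTraceDefect (fun x => k • T x) c r = k * tangentialTraceDefect T c r := by
    simp only [tangentialTraceDefect, Pi.smul_apply, smul_eq_mul, mul_assoc, ← Finset.mul_sum,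
      ← mul_sub, integral_const_mul]
    ring
  rw [hscaled, tangentialTraceDefect_congr hr hT, hlinear, mul_assoc]

theorem tangentialTraceDefect_smul_one {T : EuclideanSpace ℝ ι → ι → ι → ℝ} {a : ℝ}
    (hT : ∀ s : ℝ, 0 < s → ∀ x ≠ 0, T (s • x) = s ^ a • T x) {c : EuclideanSpace ℝ ι} {s : ℝ}
    (hs : 0 < s) (hc : s⁻¹ < ‖c‖) :
    tangentialTraceDefect T (s • c) 1 =
      s ^ (Fintype.card ι + a) * tangentialTraceDefect T c s⁻¹ := by
  have hball : ∀ x ∈ closedBall c s⁻¹, x ≠ 0 := by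
    rintro _ hx rfl
    simp [hc.not_ge] at hx
  rw [rpow_add hs, rpow_natCast, ← tangentialTraceDefect_smul (inv_nonneg.2 hs.le) hs
    fun x hx => hT s hs x (hball x hx), mul_inv_cancel₀ hs.ne']

variable [DecidableEq ι]

theorem contDiff_partialDeriv {f : EuclideanSpace ℝ ι → ℝ} {m n : WithTop ℕ∞}
    (hf : ContDiff ℝ n f) (hmn : m + 1 ≤ n) (i : ι) : ContDiff ℝ m (partialDeriv f i) :=
  (hf.fderiv_right hmn).clm_apply contDiff_const

theorem divergence_eq_sum_partialDeriv {X : EuclideanSpace ℝ ι → EuclideanSpace ℝ ι}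
    {x : EuclideanSpace ℝ ι} (hX : DifferentiableAt ℝ X x) :
    divergence X x = ∑ i, partialDeriv (fun z => X z i) i x := by
  rw [divergence, LinearMap.trace_eq_sum_inner _ (EuclideanSpace.basisFun ι ℝ)]
  refine Finset.sum_congr rfl fun i _ => ?_
  have hcoord : HasFDerivAt (fun z => X z i) ((EuclideanSpace.proj i) ∘L fderiv ℝ X x) x :=
    (EuclideanSpace.proj i : _ →L[ℝ] ℝ).hasFDerivAt.comp x hX.hasFDerivAt
  simp [partialDeriv, hcoord.fderiv, EuclideanSpace.inner_single_left]

/-- `∑_{i,j} (D_i D_j T_ij - D_i D_i T_jj)`, the linearization at the Euclidean metric of the scalar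
curvature in the direction `T`. -/
noncomputable def linearizedScalarCurvature (T : EuclideanSpace ℝ ι → ι → ι → ℝ)
    (x : EuclideanSpace ℝ ι) : ℝ :=
  ∑ i, ∑ j, (partialDeriv (partialDeriv (fun z => T z i j) j) i x -
    partialDeriv (partialDeriv (fun z => T z j j) i) i x)

theorem linearizedScalarCurvature_congr {T T' : EuclideanSpace ℝ ι → ι → ι → ℝ}
    {x : EuclideanSpace ℝ ι} (h : T =ᶠ[𝓝 x] T') :
    linearizedScalarCurvature T x = linearizedScalarCurvature T' x := by
  have hpartial (i j k l) : partialDeriv (partialDeriv (fun z => T z i j) k) l x =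
      partialDeriv (partialDeriv (fun z => T' z i j) k) l x := by
    have hij : (fun z => T z i j) =ᶠ[𝓝 x] fun z => T' z i j := h.mono fun _ hy => by simp only [hy]
    exact (partialDeriv_eventuallyEq (partialDeriv_eventuallyEq hij k) l).eq_of_nhds
  simp only [linearizedScalarCurvature, hpartial]

/-- The vector field `W_i = ∑_j (D_j T_ij - D_i T_jj)`, whose flux at infinity is, up to a constant
factor, the ADM mass when `T` is the deviation of a metric from the Euclidean one. -/
noncomputable def admField (T : EuclideanSpace ℝ ι → ι → ι → ℝ) (x : EuclideanSpace ℝ ι) :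
    EuclideanSpace ℝ ι :=
  WithLp.toLp 2 fun i =>
    ∑ j, (partialDeriv (fun z => T z i j) j x - partialDeriv (fun z => T z j j) i x)

theorem contDiff_admField {T : EuclideanSpace ℝ ι → ι → ι → ℝ} (hT : ContDiff ℝ 2 T) :
    ContDiff ℝ 1 (admField T) := by
  have hTij (i j) : ContDiff ℝ 2 fun z => T z i j := contDiff_pi.1 (contDiff_pi.1 hT i) j
  exact contDiff_euclidean.2 fun i => ContDiff.sum fun j _ =>
    (contDiff_partialDeriv (hTij i j) one_add_one_eq_two.le j).sub
      (contDiff_partialDeriv (hTij j j) one_add_one_eq_two.le i)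

theorem divergence_admField {T : EuclideanSpace ℝ ι → ι → ι → ℝ} (hT : ContDiff ℝ 2 T) :
    divergence (admField T) = linearizedScalarCurvature T := by
  have hpartial (i j k) : Differentiable ℝ (partialDeriv (fun z => T z i j) k) :=
    (contDiff_partialDeriv (contDiff_pi.1 (contDiff_pi.1 hT i) j)
      one_add_one_eq_two.le k).differentiable one_ne_zero
  ext x
  rw [divergence_eq_sum_partialDeriv ((contDiff_admField hT).differentiable one_ne_zero x)]
  refine Finset.sum_congr rfl fun i _ => ?_
  have hderiv : HasFDerivAt (fun z => admField T z i) (∑ j,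
      (fderiv ℝ (partialDeriv (fun z => T z i j) j) x -
        fderiv ℝ (partialDeriv (fun z => T z j j) i) x)) x :=
    .fun_sum fun j _ => (hpartial i j j x).hasFDerivAt.fun_sub (hpartial j j i x).hasFDerivAt
  simp [partialDeriv, hderiv.fderiv]

theorem divergence_positionField {T : EuclideanSpace ℝ ι → ι → ι → ℝ} (hT : ContDiff ℝ 1 T)
    (c x : EuclideanSpace ℝ ι) :
    divergence (positionField T c) x =
      (Fintype.card ι - 1) * ∑ i, T x i i - ⟪admField T x, x - c⟫ := by
  have hTij (i j) : HasFDerivAt (fun z => T z i j) (fderiv ℝ (fun z => T z i j) x) x :=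
    ((contDiff_pi.1 (contDiff_pi.1 hT i) j).differentiable one_ne_zero x).hasFDerivAt
  have hcoord (i) : HasFDerivAt (fun z => (z - c) i) (EuclideanSpace.proj i : _ →L[ℝ] ℝ) x :=
    (EuclideanSpace.proj i : _ →L[ℝ] ℝ).hasFDerivAt.comp x ((hasFDerivAt_id x).sub_const c)
  have hderiv (j) : partialDeriv (fun z => positionField T c z j) j x =
      ∑ i, T x i i - T x j j + (∑ i, (x - c) j * partialDeriv (fun z => T z i i) j x -
        ∑ i, (x - c) i * partialDeriv (fun z => T z i j) j x) := by
    have hfderiv : HasFDerivAt (fun z => positionField T c z j) _ x :=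
      ((HasFDerivAt.fun_sum fun i _ => hTij i i).fun_mul (hcoord j)).fun_sub
        (HasFDerivAt.fun_sum fun i _ => (hTij i j).fun_mul (hcoord i))
    rw [partialDeriv, hfderiv.fderiv]
    simp only [PiLp.sub_apply, Finset.sum_add_distrib, sub_apply, add_apply, smul_apply,
      PiLp.proj_apply, PiLp.single_eq_same, smul_eq_mul, mul_one, sum_apply, PiLp.single_apply,
      mul_ite, mul_zero, Finset.sum_ite_eq', Finset.mem_univ, ↓reduceIte, Finset.mul_sum,
      partialDeriv]
    ring
  rw [divergence_eq_sum_partialDeriv ((contDiff_positionField hT c).differentiable one_ne_zero x),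
    sub_one_mul]
  simp only [hderiv, Finset.sum_add_distrib, Finset.sum_sub_distrib, Finset.sum_const,
    Finset.card_univ, nsmul_eq_mul, admField, PiLp.inner_apply, RCLike.inner_apply, conj_trivial,
    mul_sub, Finset.mul_sum]
  rw [Finset.sum_comm (f := fun j i => (x - c) i * partialDeriv (fun z => T z i j) j x)]
  ring

theorem tangentialTraceDefect_eq_neg_integral [Nontrivial ι] {T : EuclideanSpace ℝ ι → ι → ι → ℝ}
    (hT : ContDiff ℝ 2 T) (c : EuclideanSpace ℝ ι) {r : ℝ} (hr : 0 ≤ r) :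
    tangentialTraceDefect T c r = -∫ ρ in (0)..r, ρ * flux (admField T) c ρ := by
  have hdim : 1 < finrank ℝ (EuclideanSpace ℝ ι) := by simpa using Fintype.one_lt_card
  have hball {f : EuclideanSpace ℝ ι → ℝ} (hf : Continuous f) : IntegrableOn f (closedBall c r) :=
    hf.continuousOn.integrableOn_compact (isCompact_closedBall c r)
  have hT1 := hT.of_le one_le_two
  have := hT.continuous
  have hinner : Continuous fun x => ⟪admField T x, x - c⟫ :=
    (contDiff_admField hT).continuous.inner (continuous_id.sub continuous_const)
  rw [tangentialTraceDefect, ← flux_positionField,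
    ← setIntegral_divergence_closedBall hdim (contDiff_positionField hT1 c) c hr]
  simp only [divergence_positionField hT1]
  rw [integral_sub (hball (by fun_prop)) (hball hinner), integral_const_mul, sub_sub_cancel_left,
    setIntegral_closedBall_eq_integral_sphereIntegral (hball hinner) hr]
  simp only [sphereIntegral_inner_sub]

theorem hasDerivAt_tangentialTraceDefect [Nontrivial ι] {T : EuclideanSpace ℝ ι → ι → ι → ℝ}
    (hT : ContDiff ℝ 2 T) (c : EuclideanSpace ℝ ι) {r : ℝ} (hr : 0 < r) :
    HasDerivAt (tangentialTraceDefect T c) (-(r * flux (admField T) c r)) r := by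
  have hflux := continuous_flux (contDiff_admField hT).continuous c
  refine ((continuous_id.mul hflux).integral_hasStrictDerivAt 0 r).hasDerivAt.neg
    |>.congr_of_eventuallyEq ?_
  filter_upwards [lt_mem_nhds hr] with ρ hρ
  exact tangentialTraceDefect_eq_neg_integral hT c hρ.le

theorem tangentialTraceDefect_mem_Icc [Nontrivial ι] {T : EuclideanSpace ℝ ι → ι → ι → ℝ}
    (hT : ContDiff ℝ 2 T) {c : EuclideanSpace ℝ ι} {r : ℝ} (hr : 0 ≤ r)
    (hscal : ∀ x ∈ closedBall c r, 0 ≤ linearizedScalarCurvature T x) :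
    tangentialTraceDefect T c r ∈ Icc (-(r ^ 2 / 2 * flux (admField T) c r)) 0 := by
  have hdim : 1 < finrank ℝ (EuclideanSpace ℝ ι) := by simpa using Fintype.one_lt_card
  have hW := contDiff_admField hT
  have hcont : Continuous fun ρ => ρ * flux (admField T) c ρ :=
    continuous_id.mul (continuous_flux hW.continuous c)
  rw [← divergence_admField hT] at hscal
  rw [tangentialTraceDefect_eq_neg_integral hT c hr, mem_Icc, neg_le_neg_iff, neg_nonpos]
  constructor
  · calc ∫ ρ in (0)..r, ρ * flux (admField T) c ρ ≤ ∫ ρ in (0)..r, ρ * flux (admField T) c r :=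
          intervalIntegral.integral_mono_on hr (hcont.intervalIntegrable 0 r)
            ((continuous_mul_const _).intervalIntegrable 0 r) fun ρ hρ =>
              mul_le_mul_of_nonneg_left (flux_monotoneOn_of_divergence_nonneg hdim hW hscal hρ
                (right_mem_Icc.2 hr) hρ.2) hρ.1
      _ = r ^ 2 / 2 * flux (admField T) c r := by simp
  · exact intervalIntegral.integral_nonneg hr fun ρ hρ => mul_nonneg hρ.1
      (flux_nonneg_of_divergence_nonneg hdim hW hρ.1 fun x hx =>
        hscal x (closedBall_subset_closedBall hρ.2 hx))

theorem hasDerivAt_rpow_mul_tangentialTraceDefect_inv [Nontrivial ι]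
    {T : EuclideanSpace ℝ ι → ι → ι → ℝ} (hT : ContDiff ℝ 2 T) (c : EuclideanSpace ℝ ι) (k : ℝ) :
    HasDerivAt (fun s : ℝ => s ^ k * tangentialTraceDefect T c s⁻¹)
      (k * tangentialTraceDefect T c 1 + flux (admField T) c 1) 1 := by
  have hinv : HasDerivAt (tangentialTraceDefect T c ∘ fun s => s⁻¹) _ 1 :=
    (hasDerivAt_tangentialTraceDefect hT c one_pos).comp_of_eq 1 (hasDerivAt_inv one_ne_zero)
      inv_one.symm
  exact ((hasDerivAt_rpow_const (.inl one_ne_zero)).mul hinv).congr_deriv (by simp)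

theorem deriv_G_nonneg_general [Nontrivial ι] {T : EuclideanSpace ℝ ι → ι → ι → ℝ}
    (hT : ContDiffOn ℝ 2 T {0}ᶜ) {a : ℝ} (ha : Fintype.card ι + a ≤ 2)
    (hhom : ∀ s : ℝ, 0 < s → ∀ x ≠ 0, T (s • x) = s ^ a • T x)
    (hscal : ∀ x ≠ 0, 0 ≤ linearizedScalarCurvature T x)
    {ξ : EuclideanSpace ℝ ι} (hξ : 1 < ‖ξ‖) :
    ∃ G' : ℝ, HasDerivAt (fun s : ℝ => tangentialTraceDefect T (s • ξ) 1) G' 1 ∧ 0 ≤ G' := by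
  obtain ⟨R, hR1, hRξ⟩ := exists_between hξ
  have hball : closedBall ξ R ⊆ {0}ᶜ := by
    rintro _ hx rfl
    simp [hRξ.not_ge] at hx
  obtain ⟨S, hS, hST⟩ := exists_contDiff_eventuallyEq_nhdsSet (n := 2) hT isOpen_compl_singleton
    isClosed_closedBall hball
  have hscalS : ∀ x ∈ closedBall ξ 1, 0 ≤ linearizedScalarCurvature S x := fun x hx => by
    have hxR := closedBall_subset_closedBall hR1.le hx
    rw [linearizedScalarCurvature_congr (hST.filter_mono (nhds_le_nhdsSet hxR))]
    exact hscal x (hball hxR)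
  have hrescale : (fun s => tangentialTraceDefect T (s • ξ) 1) =ᶠ[𝓝 1]
      fun s => s ^ (Fintype.card ι + a) * tangentialTraceDefect S ξ s⁻¹ := by
    filter_upwards [lt_mem_nhds (inv_lt_one_of_one_lt₀ hR1), lt_mem_nhds one_pos] with s hsR hs
    have hs_inv : s⁻¹ < R := inv_lt_of_inv_lt₀ (zero_lt_one.trans hR1) hsR
    rw [tangentialTraceDefect_smul_one hhom hs (hs_inv.trans hRξ), tangentialTraceDefect_congr
      (inv_nonneg.2 hs.le) fun x hx =>
        hST.self_of_nhdsSet (closedBall_subset_closedBall hs_inv.le hx)]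
  refine ⟨_, (hasDerivAt_rpow_mul_tangentialTraceDefect_inv hS ξ _).congr_of_eventuallyEq hrescale,
    ?_⟩
  obtain ⟨hlower, hupper⟩ := tangentialTraceDefect_mem_Icc hS zero_le_one hscalS
  have hmul := mul_le_mul_of_nonpos_right ha hupper
  linarith

end Tensor

theorem deriv_G_nonneg (T : E3 → Fin 3 → Fin 3 → ℝ)
    (hsmooth : ContDiffOn ℝ (⊤ : ℕ∞) (fun x => T x) {(0 : E3)}ᶜ)
    (hsym : ∀ x i j, T x i j = T x j i)
    (hhom : ∀ c : ℝ, 0 < c → ∀ x : E3, x ≠ 0 → ∀ i j, T (c • x) i j = (c ^ 2)⁻¹ * T x i j)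
    (hscal : ∀ x : E3, x ≠ 0 → 0 ≤ scalDiv T x)
    (ξ : E3) (hξ : 1 < ‖ξ‖) (G : ℝ → ℝ)
    (hG : ∀ s : ℝ, G s =
      (∫ y : Metric.sphere (0 : E3) 1,
          (trT T (s • ξ + (y : E3)) - quadT T (s • ξ + (y : E3)) (y : E3)) ∂sphereMeasure)
        - 2 * ∫ x in Metric.closedBall (s • ξ) 1, trT T x) :
    ∃ G'1 : ℝ, HasDerivAt G G'1 1 ∧ 0 ≤ G'1 := by
  have hG_eq : G = fun s => tangentialTraceDefect T (s • ξ) 1 := by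
    ext s
    norm_num [hG, tangentialTraceDefect, trT, quadT, sphereMeasure]
  rw [hG_eq]
  refine deriv_G_nonneg_general (a := -2) (contDiffOn_infty.1 hsmooth 2) (by norm_num)
    (fun s hs x hx => ?_) hscal hξ
  ext i j
  simp [hhom s hs x hx, rpow_neg hs.le]
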